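/- Cut elimination for the basic justification logic J: if a J-formula is provable in the tableau system J^e_CS + (cut), then it is provable in J^e_CS. -/

import Mathlib

namespace JLTab

/-- Justification terms: variables, constants, application, sum,
verifier `!`, negative verifier `?`, weak negative verifier `?̄`. -/
inductive Term : Type
  | var : ℕ → Term
  | const : ℕ → Term
  | app : Term → Term → Term
  | sum : Term → Term → Term
  | bang : Term → Term
  | quest : Term → Term
  | qbar : Term → Term
  deriving DecidableEq

/-- JL-formulas: `A ::= p | ⊥ | ¬A | A → A | t:A`. -/
inductive Fml : Type
  | prop : ℕ → Fml
  | bot : Fml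
  | neg : Fml → Fml
  | imp : Fml → Fml → Fml
  | box : Term → Fml → Fml
  deriving DecidableEq

/-- A justification logic JL is J extended by any combination of jT, jD, j4, jB, j5. -/
structure Logic where
  hasT : Bool
  hasD : Bool
  has4 : Bool
  hasB : Bool
  has5 : Bool

/-- The basic justification logic J. -/
def Logic.J : Logic := ⟨false, false, false, false, false⟩

/-- The logic of proofs LP = JT4. -/
def Logic.LP : Logic := ⟨true, false, true, false, false⟩

/-- The logic JT45. -/
def Logic.JT45 : Logic := ⟨true, false, true, false, true⟩

/-- Propositional evaluation of a formula, treating propositional variables and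
formulas `t:A` as atoms. -/
def evalProp (v : Fml → Bool) : Fml → Bool
  | .prop n => v (.prop n)
  | .bot => false
  | .neg A => !(evalProp v A)
  | .imp A B => !(evalProp v A) || evalProp v B
  | .box t A => v (.box t A)

/-- A propositional tautology. -/
def IsTaut (A : Fml) : Prop := ∀ v : Fml → Bool, evalProp v A = true

/-- Axiom instances of the justification logic `L`. -/
inductive Axm (L : Logic) : Fml → Prop
  | taut {A} : IsTaut A → Axm L A
  | sumL {s t A} : Axm L (.imp (.box s A) (.box (.sum s t) A))
  | sumR {s t A} : Axm L (.imp (.box s A) (.box (.sum t s) A))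
  | jK {s t A B} :
      Axm L (.imp (.box s (.imp A B)) (.imp (.box t A) (.box (.app s t) B)))
  | jT {t A} : L.hasT = true → Axm L (.imp (.box t A) A)
  | jD {t} : L.hasD = true → Axm L (.imp (.box t .bot) .bot)
  | j4 {t A} : L.has4 = true → Axm L (.imp (.box t A) (.box (.bang t) (.box t A)))
  | jB {t A} : L.hasB = true →
      Axm L (.imp (.neg A) (.box (.qbar t) (.neg (.box t A))))
  | j5 {t A} : L.has5 = true →
      Axm L (.imp (.neg (.box t A)) (.box (.quest t) (.neg (.box t A))))

/-- Formulas of the form `c_{i_n} : ⋯ : c_{i_1} : A` (n ≥ 1) with `A` an axiom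
instance of `L`; exactly the formulas produced by Iterated Axiom Necessitation. -/
inductive IsIAN (L : Logic) : Fml → Prop
  | base {c A} : Axm L A → IsIAN L (.box (.const c) A)
  | step {c F} : IsIAN L F → IsIAN L (.box (.const c) F)

/-- A constant specification for `L`: a downward closed set of formulas of the
form `c_{i_n} : ⋯ : c_{i_1} : A` with `A` an axiom instance of `L`. -/
structure ConstSpec (L : Logic) where
  set : Set Fml
  mem_ian : ∀ F ∈ set, IsIAN L F
  downward : ∀ c F, Fml.box (Term.const c) F ∈ set → IsIAN L F → F ∈ set

/-- The Hilbert system JL_CS: axioms of `L`, Modus Ponens, and Iterated Axiom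
Necessitation restricted to the constant specification `cs`. -/
inductive Deriv (L : Logic) (cs : ConstSpec L) : Fml → Prop
  | axm {A} : Axm L A → Deriv L cs A
  | mp {A B} : Deriv L cs (.imp A B) → Deriv L cs A → Deriv L cs B
  | ian {F} : F ∈ cs.set → Deriv L cs F

/-- An M-model (Mkrtychev model): an admissible evidence function together with
a valuation of propositional variables. -/
structure MModel where
  ev : Term → Set Fml
  val : ℕ → Prop

/-- Truth in an M-model; `t:A` is true iff `A ∈ E(t)`. -/
def MModel.sat (M : MModel) : Fml → Prop
  | .prop n => M.val n
  | .bot => False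
  | .neg A => ¬ M.sat A
  | .imp A B => M.sat A → M.sat B
  | .box t A => A ∈ M.ev t

/-- `M` is an M-model for JL_CS: conditions E1–E3 always, and E4–E8 according to
the extra axioms of the logic `L`. -/
structure IsModel (L : Logic) (cs : ConstSpec L) (M : MModel) : Prop where
  e1 : ∀ s t A B, Fml.imp A B ∈ M.ev s → A ∈ M.ev t → B ∈ M.ev (.app s t)
  e2l : ∀ s t, M.ev s ⊆ M.ev (.sum s t)
  e2r : ∀ s t, M.ev t ⊆ M.ev (.sum s t)
  e3 : ∀ c F, Fml.box (.const c) F ∈ cs.set → F ∈ M.ev (.const c)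
  e4 : L.hasT = true → ∀ t A, A ∈ M.ev t → M.sat A
  e5 : L.hasD = true → ∀ t, Fml.bot ∉ M.ev t
  e6 : L.has4 = true → ∀ t A, A ∈ M.ev t → Fml.box t A ∈ M.ev (.bang t)
  e7 : L.hasB = true → ∀ t A, ¬ M.sat A → Fml.neg (.box t A) ∈ M.ev (.qbar t)
  e8 : L.has5 = true → ∀ t A, A ∉ M.ev t → Fml.neg (.box t A) ∈ M.ev (.quest t)

/-- `A` is JL_CS-valid: true in every M-model of JL_CS. -/
def Valid (L : Logic) (cs : ConstSpec L) (A : Fml) : Prop :=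
  ∀ M : MModel, IsModel L cs M → M.sat A

/-- `Subf A B`: `A` is a subformula of `B`. -/
inductive Subf : Fml → Fml → Prop
  | refl (A) : Subf A A
  | neg {A B} : Subf A B → Subf A (.neg B)
  | impL {A B C} : Subf A B → Subf A (.imp B C)
  | impR {A C B} : Subf A C → Subf A (.imp B C)
  | box {A B t} : Subf A B → Subf A (.box t B)

/-- `A` is a CS-subformula of the root set `R`: a subformula of a formula in
`R ∪ CS`. -/
def CSSub {L : Logic} (cs : ConstSpec L) (R : Set Fml) (A : Fml) : Prop :=
  (∃ B ∈ R, Subf A B) ∨ (∃ F ∈ cs.set, Subf A F)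

/-- `A` is a weak CS-subformula of the root set `R`: a subformula, or the
negation of a subformula, of a formula in `R ∪ CS`. -/
def WeakCSSub {L : Logic} (cs : ConstSpec L) (R : Set Fml) (A : Fml) : Prop :=
  CSSub cs R A ∨ ∃ C, A = Fml.neg C ∧ CSSub cs R C

/-- `SubTm u t`: `u` is a subterm of `t`. -/
inductive SubTm : Term → Term → Prop
  | refl (t) : SubTm t t
  | appL {u s t} : SubTm u s → SubTm u (.app s t)
  | appR {u s t} : SubTm u t → SubTm u (.app s t)
  | sumL {u s t} : SubTm u s → SubTm u (.sum s t)
  | sumR {u s t} : SubTm u t → SubTm u (.sum s t)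
  | bang {u t} : SubTm u t → SubTm u (.bang t)
  | quest {u t} : SubTm u t → SubTm u (.quest t)
  | qbar {u t} : SubTm u t → SubTm u (.qbar t)

/-- `OccT u A`: the term `u` occurs in the formula `A`. -/
inductive OccT (u : Term) : Fml → Prop
  | neg {A} : OccT u A → OccT u (.neg A)
  | impL {A B} : OccT u A → OccT u (.imp A B)
  | impR {A B} : OccT u B → OccT u (.imp A B)
  | boxT {t A} : SubTm u t → OccT u (.box t A)
  | boxF {t A} : OccT u A → OccT u (.box t A)

/-- The term `u` occurs in (some formula of) the root set `R`. -/
def OccRoot (R : Set Fml) (u : Term) : Prop := ∃ B ∈ R, OccT u B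

/-- Nodes of a tableau: JL-formulas `A`, and evidential formulas
`[t,A]` (`pos`) and `∼[t,A]` (`neg`). -/
inductive Node : Type
  | fml : Fml → Node
  | pos : Term → Fml → Node
  | neg : Term → Fml → Node
  deriving DecidableEq

/-- `TabN L cs pb cut R Γ n`: the branch `Γ` of a tableau with root set `R` has
a closed tableau continuation using `n` rule applications.  The flag `pb`
enables the analytic rules (PB), (PB_e); the flag `cut` enables the
unrestricted cut rules (cut_f), (cut_e).  The rules (e), (e_⊥), (!), (?̄), (?)
are enabled according to the extra axioms of the logic `L`.  Base cases are the
four branch-closure conditions. -/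
inductive TabN (L : Logic) (cs : ConstSpec L) (pb cut : Bool) (R : Set Fml) :
    Set Node → ℕ → Prop
  | closeF {Γ A} : Node.fml A ∈ Γ → Node.fml (.neg A) ∈ Γ → TabN L cs pb cut R Γ 0
  | closeE {Γ t A} : Node.pos t A ∈ Γ → Node.neg t A ∈ Γ → TabN L cs pb cut R Γ 0
  | closeBot {Γ} : Node.fml .bot ∈ Γ → TabN L cs pb cut R Γ 0
  | closeCS {Γ c F} : Fml.box (.const c) F ∈ cs.set →
      Node.fml (.neg (.box (.const c) F)) ∈ Γ → TabN L cs pb cut R Γ 0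
  | fNeg {Γ A n} : Node.fml (.neg (.neg A)) ∈ Γ →
      TabN L cs pb cut R (insert (Node.fml A) Γ) n → TabN L cs pb cut R Γ (n + 1)
  | fImp {Γ A B n} : Node.fml (.neg (.imp A B)) ∈ Γ →
      TabN L cs pb cut R (insert (Node.fml A) (insert (Node.fml (.neg B)) Γ)) n →
      TabN L cs pb cut R Γ (n + 1)
  | tImp {Γ A B m n} : Node.fml (.imp A B) ∈ Γ →
      TabN L cs pb cut R (insert (Node.fml (.neg A)) Γ) m →
      TabN L cs pb cut R (insert (Node.fml B) Γ) n →
      TabN L cs pb cut R Γ (m + n + 1)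
  | te {Γ t A n} : Node.fml (.box t A) ∈ Γ →
      TabN L cs pb cut R (insert (Node.pos t A) Γ) n → TabN L cs pb cut R Γ (n + 1)
  | fe {Γ t A n} : Node.fml (.neg (.box t A)) ∈ Γ →
      TabN L cs pb cut R (insert (Node.neg t A) Γ) n → TabN L cs pb cut R Γ (n + 1)
  | plusL {Γ t s A n} : Node.neg (.sum t s) A ∈ Γ →
      TabN L cs pb cut R (insert (Node.neg t A) Γ) n → TabN L cs pb cut R Γ (n + 1)
  | plusR {Γ t s A n} : Node.neg (.sum t s) A ∈ Γ →
      TabN L cs pb cut R (insert (Node.neg s A) Γ) n → TabN L cs pb cut R Γ (n + 1)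
  | appR {Γ s t A B n} : Node.pos s (.imp A B) ∈ Γ → Node.pos t A ∈ Γ →
      CSSub cs R (.imp A B) → OccRoot R (.app s t) →
      TabN L cs pb cut R (insert (Node.pos (.app s t) B) Γ) n →
      TabN L cs pb cut R Γ (n + 1)
  | rulePB {Γ A m n} : pb = true → CSSub cs R A →
      TabN L cs pb cut R (insert (Node.fml A) Γ) m →
      TabN L cs pb cut R (insert (Node.fml (.neg A)) Γ) n →
      TabN L cs pb cut R Γ (m + n + 1)
  | rulePBe {Γ t A m n} : pb = true → CSSub cs R A → OccRoot R t →
      TabN L cs pb cut R (insert (Node.pos t A) Γ) m →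
      TabN L cs pb cut R (insert (Node.neg t A) Γ) n →
      TabN L cs pb cut R Γ (m + n + 1)
  | cutF {Γ A m n} : cut = true →
      TabN L cs pb cut R (insert (Node.fml A) Γ) m →
      TabN L cs pb cut R (insert (Node.fml (.neg A)) Γ) n →
      TabN L cs pb cut R Γ (m + n + 1)
  | cutE {Γ t A m n} : cut = true →
      TabN L cs pb cut R (insert (Node.pos t A) Γ) m →
      TabN L cs pb cut R (insert (Node.neg t A) Γ) n →
      TabN L cs pb cut R Γ (m + n + 1)
  | ruleT {Γ t A n} : L.hasT = true → Node.pos t A ∈ Γ →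
      TabN L cs pb cut R (insert (Node.fml A) Γ) n → TabN L cs pb cut R Γ (n + 1)
  | ruleD {Γ t n} : L.hasD = true → Node.pos t .bot ∈ Γ →
      TabN L cs pb cut R (insert (Node.fml .bot) Γ) n → TabN L cs pb cut R Γ (n + 1)
  | rule4 {Γ t A n} : L.has4 = true → Node.neg (.bang t) (.box t A) ∈ Γ →
      TabN L cs pb cut R (insert (Node.neg t A) Γ) n → TabN L cs pb cut R Γ (n + 1)
  | ruleB {Γ t A n} : L.hasB = true → Node.neg (.qbar t) (.neg (.box t A)) ∈ Γ →
      TabN L cs pb cut R (insert (Node.fml A) Γ) n → TabN L cs pb cut R Γ (n + 1)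
  | rule5 {Γ t A n} : L.has5 = true → Node.neg (.quest t) (.neg (.box t A)) ∈ Γ →
      TabN L cs pb cut R (insert (Node.pos t A) Γ) n → TabN L cs pb cut R Γ (n + 1)

/-- There is a closed tableau below the branch `Γ` (root set `R`). -/
def Tab (L : Logic) (cs : ConstSpec L) (pb cut : Bool) (R : Set Fml)
    (Γ : Set Node) : Prop :=
  ∃ n, TabN L cs pb cut R Γ n

/-- A tableau proof of `A`: a closed tableau whose root is `¬A`. -/
def TabProof (L : Logic) (cs : ConstSpec L) (pb cut : Bool) (A : Fml) : Prop :=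
  Tab L cs pb cut {Fml.neg A} {Node.fml (Fml.neg A)}

/-- A single application of a JL^e_CS-tableau rule to the branch `Γ` (root set
`R`), producing the list of extended branches (one for a non-branching rule,
two for a branching rule). -/
inductive RuleApp (L : Logic) (cs : ConstSpec L) (R : Set Fml) (Γ : Set Node) :
    List (Set Node) → Prop
  | fNeg {A} : Node.fml (.neg (.neg A)) ∈ Γ →
      RuleApp L cs R Γ [insert (Node.fml A) Γ]
  | fImp {A B} : Node.fml (.neg (.imp A B)) ∈ Γ →
      RuleApp L cs R Γ [insert (Node.fml A) (insert (Node.fml (.neg B)) Γ)]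
  | tImp {A B} : Node.fml (.imp A B) ∈ Γ →
      RuleApp L cs R Γ [insert (Node.fml (.neg A)) Γ, insert (Node.fml B) Γ]
  | te {t A} : Node.fml (.box t A) ∈ Γ → RuleApp L cs R Γ [insert (Node.pos t A) Γ]
  | fe {t A} : Node.fml (.neg (.box t A)) ∈ Γ →
      RuleApp L cs R Γ [insert (Node.neg t A) Γ]
  | plusL {t s A} : Node.neg (.sum t s) A ∈ Γ →
      RuleApp L cs R Γ [insert (Node.neg t A) Γ]
  | plusR {t s A} : Node.neg (.sum t s) A ∈ Γ →
      RuleApp L cs R Γ [insert (Node.neg s A) Γ]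
  | appR {s t A B} : Node.pos s (.imp A B) ∈ Γ → Node.pos t A ∈ Γ →
      CSSub cs R (.imp A B) → OccRoot R (.app s t) →
      RuleApp L cs R Γ [insert (Node.pos (.app s t) B) Γ]
  | rulePB {A} : CSSub cs R A →
      RuleApp L cs R Γ [insert (Node.fml A) Γ, insert (Node.fml (.neg A)) Γ]
  | rulePBe {t A} : CSSub cs R A → OccRoot R t →
      RuleApp L cs R Γ [insert (Node.pos t A) Γ, insert (Node.neg t A) Γ]
  | ruleT {t A} : L.hasT = true → Node.pos t A ∈ Γ →
      RuleApp L cs R Γ [insert (Node.fml A) Γ]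
  | ruleD {t} : L.hasD = true → Node.pos t .bot ∈ Γ →
      RuleApp L cs R Γ [insert (Node.fml .bot) Γ]
  | rule4 {t A} : L.has4 = true → Node.neg (.bang t) (.box t A) ∈ Γ →
      RuleApp L cs R Γ [insert (Node.neg t A) Γ]
  | ruleB {t A} : L.hasB = true → Node.neg (.qbar t) (.neg (.box t A)) ∈ Γ →
      RuleApp L cs R Γ [insert (Node.fml A) Γ]
  | rule5 {t A} : L.has5 = true → Node.neg (.quest t) (.neg (.box t A)) ∈ Γ →
      RuleApp L cs R Γ [insert (Node.pos t A) Γ]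

/-- Satisfaction of tableau nodes in an M-model: `M` satisfies `[t,A]` iff
`A ∈ E(t)`, and satisfies `∼[t,A]` iff `A ∉ E(t)`. -/
def NodeSat (M : MModel) : Node → Prop
  | .fml A => M.sat A
  | .pos t A => A ∈ M.ev t
  | .neg t A => A ∉ M.ev t

/-- Branches reachable from the initial branch by tableau rule applications. -/
inductive Reach (L : Logic) (cs : ConstSpec L) (R : Set Fml) :
    Set Node → Set Node → Prop
  | refl (Γ) : Reach L cs R Γ Γ
  | step {Γ Γ' Γ'' exts} : Reach L cs R Γ Γ' → RuleApp L cs R Γ' exts →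
      Γ'' ∈ exts → Reach L cs R Γ Γ''

/-- One non-redundant tableau construction step: a rule application properly
extending the branch. -/
def Step (L : Logic) (cs : ConstSpec L) (R : Set Fml) (Γ Γ' : Set Node) : Prop :=
  ∃ exts, RuleApp L cs R Γ exts ∧ Γ' ∈ exts ∧ Γ ⊂ Γ'

/-- The term is in the language of the logic `L` (which contains those
operations occurring in the axioms of `L`). -/
def TermInLang (L : Logic) : Term → Prop
  | .var _ => True
  | .const _ => True
  | .app s t => TermInLang L s ∧ TermInLang L t
  | .sum s t => TermInLang L s ∧ TermInLang L t
  | .bang t => L.has4 = true ∧ TermInLang L t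
  | .quest t => L.has5 = true ∧ TermInLang L t
  | .qbar t => L.hasB = true ∧ TermInLang L t

/-- The formula is in the language of the logic `L`. -/
def FmlInLang (L : Logic) : Fml → Prop
  | .prop _ => True
  | .bot => True
  | .neg A => FmlInLang L A
  | .imp A B => FmlInLang L A ∧ FmlInLang L B
  | .box t A => TermInLang L t ∧ FmlInLang L A

/-- The initial branch of a tableau for a finite set `S` of formulas. -/
def branchOf (S : Finset Fml) : Set Node := Node.fml '' (↑S : Set Fml)

end JLTab

namespace JLTab

theorem eventually_insert {ι : Type} {l : Filter ι} {S : ι → Set Node} {Γ : Set Node} (y : Node)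
    (h : ∀ x ∈ Γ, ∀ᶠ i in l, x ∈ S i) :
    ∀ x ∈ insert y Γ, ∀ᶠ i in l, x ∈ insert y (S i) := by
  rintro x (rfl | hx)
  · exact Filter.Eventually.of_forall fun i => Set.mem_insert _ _
  · exact (h x hx).mono fun i hi => Set.mem_insert_of_mem _ hi

theorem TabN.eventually {L : Logic} {cs : ConstSpec L} {pb cut : Bool} {R : Set Fml}
    {ι : Type} {l : Filter ι} {Γ : Set Node} {n : ℕ} (d : TabN L cs pb cut R Γ n) :
    ∀ S : ι → Set Node, (∀ x ∈ Γ, ∀ᶠ i in l, x ∈ S i) →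
      ∀ᶠ i in l, TabN L cs pb cut R (S i) n := by
  induction d with
  | closeF h1 h2 =>
    intro S hS
    filter_upwards [hS _ h1, hS _ h2] with i a b using .closeF a b
  | closeE h1 h2 =>
    intro S hS
    filter_upwards [hS _ h1, hS _ h2] with i a b using .closeE a b
  | closeBot h1 =>
    intro S hS
    filter_upwards [hS _ h1] with i a using .closeBot a
  | closeCS h0 h1 =>
    intro S hS
    filter_upwards [hS _ h1] with i a using .closeCS h0 a
  | fNeg h1 _ ih =>
    intro S hS
    filter_upwards [hS _ h1, ih _ (eventually_insert _ hS)] with i a b using .fNeg a b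
  | fImp h1 _ ih =>
    intro S hS
    filter_upwards [hS _ h1, ih _ (eventually_insert _ (eventually_insert _ hS))] with i a b
      using .fImp a b
  | tImp h1 _ _ ih1 ih2 =>
    intro S hS
    filter_upwards [hS _ h1, ih1 _ (eventually_insert _ hS), ih2 _ (eventually_insert _ hS)]
      with i a b c using .tImp a b c
  | te h1 _ ih =>
    intro S hS
    filter_upwards [hS _ h1, ih _ (eventually_insert _ hS)] with i a b using .te a b
  | fe h1 _ ih =>
    intro S hS
    filter_upwards [hS _ h1, ih _ (eventually_insert _ hS)] with i a b using .fe a b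
  | plusL h1 _ ih =>
    intro S hS
    filter_upwards [hS _ h1, ih _ (eventually_insert _ hS)] with i a b using .plusL a b
  | plusR h1 _ ih =>
    intro S hS
    filter_upwards [hS _ h1, ih _ (eventually_insert _ hS)] with i a b using .plusR a b
  | appR h1 h2 h3 h4 _ ih =>
    intro S hS
    filter_upwards [hS _ h1, hS _ h2, ih _ (eventually_insert _ hS)] with i a b c
      using .appR a b h3 h4 c
  | rulePB h1 h2 _ _ ih1 ih2 =>
    intro S hS
    filter_upwards [ih1 _ (eventually_insert _ hS), ih2 _ (eventually_insert _ hS)]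
      with i b c using .rulePB h1 h2 b c
  | rulePBe h1 h2 h3 _ _ ih1 ih2 =>
    intro S hS
    filter_upwards [ih1 _ (eventually_insert _ hS), ih2 _ (eventually_insert _ hS)]
      with i b c using .rulePBe h1 h2 h3 b c
  | cutF h1 _ _ ih1 ih2 =>
    intro S hS
    filter_upwards [ih1 _ (eventually_insert _ hS), ih2 _ (eventually_insert _ hS)]
      with i b c using .cutF h1 b c
  | cutE h1 _ _ ih1 ih2 =>
    intro S hS
    filter_upwards [ih1 _ (eventually_insert _ hS), ih2 _ (eventually_insert _ hS)]
      with i b c using .cutE h1 b c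
  | ruleT h0 h1 _ ih =>
    intro S hS
    filter_upwards [hS _ h1, ih _ (eventually_insert _ hS)] with i a b using .ruleT h0 a b
  | ruleD h0 h1 _ ih =>
    intro S hS
    filter_upwards [hS _ h1, ih _ (eventually_insert _ hS)] with i a b using .ruleD h0 a b
  | rule4 h0 h1 _ ih =>
    intro S hS
    filter_upwards [hS _ h1, ih _ (eventually_insert _ hS)] with i a b using .rule4 h0 a b
  | ruleB h0 h1 _ ih =>
    intro S hS
    filter_upwards [hS _ h1, ih _ (eventually_insert _ hS)] with i a b using .ruleB h0 a b
  | rule5 h0 h1 _ ih =>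
    intro S hS
    filter_upwards [hS _ h1, ih _ (eventually_insert _ hS)] with i a b using .rule5 h0 a b

/-- Every open branch extends to a maximal open branch. -/
theorem exists_maximal {L : Logic} {cs : ConstSpec L} {pb cut : Bool} {R : Set Fml}
    {Γ : Set Node} (h : ¬ Tab L cs pb cut R Γ) :
    ∃ Δ, Γ ⊆ Δ ∧ ¬ Tab L cs pb cut R Δ ∧ ∀ x, x ∉ Δ → Tab L cs pb cut R (insert x Δ) := by
  obtain ⟨Δ, hΓ, hΔ⟩ := zorn_subset_nonempty {Δ | ¬ Tab L cs pb cut R Δ} (by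
    intro c hc hch hne
    refine ⟨⋃₀ c, ?_, fun s hs => Set.subset_sUnion_of_mem hs⟩
    rintro ⟨n, d⟩
    have : Nonempty c := hne.to_subtype
    have : IsDirectedOrder c := ⟨fun a b => by
      rcases hch.total a.2 b.2 with h | h
      · exact ⟨b, h, le_rfl⟩
      · exact ⟨a, le_rfl, h⟩⟩
    have := d.eventually (l := (Filter.atTop : Filter c)) (fun i => i.1) (by
      rintro x ⟨m, hm, hx⟩
      filter_upwards [Filter.eventually_ge_atTop (⟨m, hm⟩ : c)] with i hi
      exact hi hx)
    obtain ⟨i, hi⟩ := this.exists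
    exact hc i.2 ⟨n, hi⟩) Γ h
  refine ⟨Δ, hΓ, hΔ.prop, fun x hx => ?_⟩
  by_contra hcon
  exact hx (hΔ.le_of_ge hcon (Set.subset_insert _ _) (Set.mem_insert _ _))

/-- Soundness of the tableau system for J with cut. -/
theorem TabN.sound {cs : ConstSpec Logic.J} {pb cut : Bool} {R : Set Fml} {M : MModel}
    (hM : IsModel Logic.J cs M) {Γ : Set Node} {n : ℕ} (d : TabN Logic.J cs pb cut R Γ n) :
    ¬ ∀ x ∈ Γ, NodeSat M x := by
  induction d with
  | closeF h1 h2 => exact fun h => h _ h2 (h _ h1)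
  | closeE h1 h2 => exact fun h => h _ h2 (h _ h1)
  | closeBot h1 => exact fun h => h _ h1
  | closeCS h0 h1 => exact fun h => h _ h1 (hM.e3 _ _ h0)
  | fNeg h1 _ ih =>
    intro h
    refine ih (Set.forall_mem_insert.2 ⟨?_, h⟩)
    exact not_not.1 (h _ h1)
  | fImp h1 _ ih =>
    intro h
    have := h _ h1
    simp only [NodeSat, MModel.sat, Classical.not_imp] at this
    exact ih (Set.forall_mem_insert.2 ⟨this.1, Set.forall_mem_insert.2 ⟨this.2, h⟩⟩)
  | tImp h1 _ _ ih1 ih2 =>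
    intro h
    have h3 := h _ h1
    refine ih1 (Set.forall_mem_insert.2 ⟨fun ha => ?_, h⟩)
    exact ih2 (Set.forall_mem_insert.2 ⟨h3 ha, h⟩)
  | te h1 _ ih =>
    intro h
    have h2 := h _ h1
    exact ih (Set.forall_mem_insert.2 ⟨h2, h⟩)
  | fe h1 _ ih =>
    intro h
    have h2 := h _ h1
    exact ih (Set.forall_mem_insert.2 ⟨h2, h⟩)
  | plusL h1 _ ih =>
    exact fun h => ih (Set.forall_mem_insert.2 ⟨fun ha => h _ h1 (hM.e2l _ _ ha), h⟩)
  | plusR h1 _ ih =>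
    exact fun h => ih (Set.forall_mem_insert.2 ⟨fun ha => h _ h1 (hM.e2r _ _ ha), h⟩)
  | appR h1 h2 h3 h4 _ ih =>
    exact fun h => ih (Set.forall_mem_insert.2 ⟨hM.e1 _ _ _ _ (h _ h1) (h _ h2), h⟩)
  | rulePB _ _ _ _ ih1 ih2 =>
    exact fun h => ih2 (Set.forall_mem_insert.2
      ⟨fun ha => ih1 (Set.forall_mem_insert.2 ⟨ha, h⟩), h⟩)
  | rulePBe _ _ _ _ _ ih1 ih2 =>
    exact fun h => ih2 (Set.forall_mem_insert.2
      ⟨fun ha => ih1 (Set.forall_mem_insert.2 ⟨ha, h⟩), h⟩)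
  | cutF _ _ _ ih1 ih2 =>
    exact fun h => ih2 (Set.forall_mem_insert.2
      ⟨fun ha => ih1 (Set.forall_mem_insert.2 ⟨ha, h⟩), h⟩)
  | cutE _ _ _ ih1 ih2 =>
    exact fun h => ih2 (Set.forall_mem_insert.2
      ⟨fun ha => ih1 (Set.forall_mem_insert.2 ⟨ha, h⟩), h⟩)
  | ruleT h0 => exact absurd h0 (by decide)
  | ruleD h0 => exact absurd h0 (by decide)
  | rule4 h0 => exact absurd h0 (by decide)
  | ruleB h0 => exact absurd h0 (by decide)
  | rule5 h0 => exact absurd h0 (by decide)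

theorem Subf.trans {A B C : Fml} (h1 : Subf A B) (h2 : Subf B C) : Subf A C := by
  induction h2 with
  | refl => exact h1
  | neg _ ih => exact .neg ih
  | impL _ ih => exact .impL ih
  | impR _ ih => exact .impR ih
  | box _ ih => exact .box ih

theorem SubTm.trans {a b c : Term} (h1 : SubTm a b) (h2 : SubTm b c) : SubTm a c := by
  induction h2 with
  | refl => exact h1
  | appL _ ih => exact .appL ih
  | appR _ ih => exact .appR ih
  | sumL _ ih => exact .sumL ih
  | sumR _ ih => exact .sumR ih
  | bang _ ih => exact .bang ih
  | quest _ ih => exact .quest ih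
  | qbar _ ih => exact .qbar ih

theorem OccRoot.sub {R : Set Fml} {u t : Term} (hs : SubTm u t) (h : OccRoot R t) :
    OccRoot R u := by
  obtain ⟨B, hB, h⟩ := h
  refine ⟨B, hB, ?_⟩
  clear hB
  induction h with
  | neg _ ih => exact .neg ih
  | impL _ ih => exact .impL ih
  | impR _ ih => exact .impR ih
  | boxT h => exact .boxT (hs.trans h)
  | boxF _ ih => exact .boxF ih

theorem CSSub.sub {L : Logic} {cs : ConstSpec L} {R : Set Fml} {A B : Fml} (hs : Subf A B)
    (h : CSSub cs R B) : CSSub cs R A := by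
  rcases h with ⟨C, hC, h⟩ | ⟨C, hC, h⟩
  · exact .inl ⟨C, hC, hs.trans h⟩
  · exact .inr ⟨C, hC, hs.trans h⟩

theorem OccT.of_subf {t : Term} {A B : Fml} (h : Subf (.box t A) B) : OccT t B := by
  generalize hC : Fml.box t A = C at h
  induction h with
  | refl => subst hC; exact .boxT (.refl _)
  | neg _ ih => exact .neg ih
  | impL _ ih => exact .impL ih
  | impR _ ih => exact .impR ih
  | box _ ih => exact .boxF ih

/-- The least evidence relation generated by an open branch. -/
inductive Evid {L : Logic} (cs : ConstSpec L) (R : Set Fml) (Δ : Set Node) : Term → Fml → Prop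
  | base {t F} : Node.pos t F ∈ Δ → CSSub cs R F → Evid cs R Δ t F
  | cons {c F} : Fml.box (.const c) F ∈ cs.set → Evid cs R Δ (.const c) F
  | app {s t A B} : Evid cs R Δ s (.imp A B) → Evid cs R Δ t A → Evid cs R Δ (.app s t) B
  | sumL {s t A} : Evid cs R Δ s A → Evid cs R Δ (.sum s t) A
  | sumR {s t A} : Evid cs R Δ t A → Evid cs R Δ (.sum s t) A

theorem Evid.mem {L : Logic} {cs : ConstSpec L} {cut : Bool} {R : Set Fml} {Δ : Set Node}
    (hopen : ¬ Tab L cs true cut R Δ)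
    (hmax : ∀ x, x ∉ Δ → Tab L cs true cut R (insert x Δ))
    {t : Term} {F : Fml} (h : Evid cs R Δ t F) (ht : OccRoot R t) :
    Node.pos t F ∈ Δ ∧ CSSub cs R F := by
  have pbe : ∀ t F, CSSub cs R F → OccRoot R t → Node.pos t F ∉ Δ → Node.neg t F ∈ Δ := by
    intro t F hF ht hn
    by_contra hn2
    obtain ⟨_, d1⟩ := hmax _ hn
    obtain ⟨_, d2⟩ := hmax _ hn2
    exact hopen ⟨_, .rulePBe rfl hF ht d1 d2⟩
  induction h with
  | base h1 h2 => exact ⟨h1, h2⟩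
  | @cons c F hc =>
    have hb : CSSub cs R (.box (.const c) F) := .inr ⟨_, hc, .refl _⟩
    refine ⟨?_, hb.sub (.box (.refl _))⟩
    by_contra hn
    obtain ⟨_, d⟩ := hmax _ hn
    have hb1 : Node.fml (.box (.const c) F) ∉ Δ := fun hm => hopen ⟨_, .te hm d⟩
    have hb2 : Node.fml (.neg (.box (.const c) F)) ∉ Δ := fun hm => hopen ⟨_, .closeCS hc hm⟩
    obtain ⟨_, d1⟩ := hmax _ hb1
    obtain ⟨_, d2⟩ := hmax _ hb2
    exact hopen ⟨_, .rulePB rfl hb d1 d2⟩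
  | app _ _ ih1 ih2 =>
    obtain ⟨a1, a2⟩ := ih1 (ht.sub (.appL (.refl _)))
    obtain ⟨b1, b2⟩ := ih2 (ht.sub (.appR (.refl _)))
    refine ⟨?_, a2.sub (.impR (.refl _))⟩
    by_contra hn
    obtain ⟨_, d⟩ := hmax _ hn
    exact hopen ⟨_, .appR a1 b1 a2 ht d⟩
  | @sumL s t A _ ih =>
    obtain ⟨a1, a2⟩ := ih (ht.sub (.sumL (.refl _)))
    refine ⟨?_, a2⟩
    by_contra hn
    by_cases hm : Node.neg s A ∈ Δ
    · exact hopen ⟨_, .closeE a1 hm⟩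
    · obtain ⟨_, d⟩ := hmax _ hm
      exact hopen ⟨_, .plusL (pbe _ _ a2 ht hn) d⟩
  | @sumR s t A _ ih =>
    obtain ⟨a1, a2⟩ := ih (ht.sub (.sumR (.refl _)))
    refine ⟨?_, a2⟩
    by_contra hn
    by_cases hm : Node.neg t A ∈ Δ
    · exact hopen ⟨_, .closeE a1 hm⟩
    · obtain ⟨_, d⟩ := hmax _ hm
      exact hopen ⟨_, .plusR (pbe _ _ a2 ht hn) d⟩

/-- The model read off an open branch. -/
def branchModel {L : Logic} (cs : ConstSpec L) (R : Set Fml) (Δ : Set Node) : MModel where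
  ev t := {F | Evid cs R Δ t F}
  val n := Node.fml (.prop n) ∈ Δ

theorem branchModel_isModel (cs : ConstSpec Logic.J) (R : Set Fml) (Δ : Set Node) :
    IsModel Logic.J cs (branchModel cs R Δ) where
  e1 _ _ _ _ h1 h2 := .app h1 h2
  e2l _ _ _ h := .sumL h
  e2r _ _ _ h := .sumR h
  e3 _ _ h := .cons h
  e4 h := absurd h (by decide)
  e5 h := absurd h (by decide)
  e6 h := absurd h (by decide)
  e7 h := absurd h (by decide)
  e8 h := absurd h (by decide)

theorem truth {L : Logic} {cs : ConstSpec L} {cut : Bool} {R : Set Fml} {Δ : Set Node}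
    (hopen : ¬ Tab L cs true cut R Δ)
    (hmax : ∀ x, x ∉ Δ → Tab L cs true cut R (insert x Δ)) (B : Fml) :
    (∃ C ∈ R, Subf B C) →
      (Node.fml B ∈ Δ → (branchModel cs R Δ).sat B) ∧
      (Node.fml (.neg B) ∈ Δ → ¬ (branchModel cs R Δ).sat B) := by
  induction B with
  | prop n =>
    intro _
    exact ⟨fun h => h, fun h h' => hopen ⟨_, .closeF h' h⟩⟩
  | bot =>
    intro _
    exact ⟨fun h => hopen ⟨_, .closeBot h⟩, fun _ h => h⟩
  | neg B ih =>
    rintro ⟨C, hC, hs⟩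
    obtain ⟨i1, i2⟩ := ih ⟨C, hC, .trans (.neg (.refl _)) hs⟩
    refine ⟨i2, fun h hn => hn (i1 ?_)⟩
    by_contra hm
    obtain ⟨_, d⟩ := hmax _ hm
    exact hopen ⟨_, .fNeg h d⟩
  | imp A B ihA ihB =>
    rintro ⟨C, hC, hs⟩
    obtain ⟨a1, a2⟩ := ihA ⟨C, hC, .trans (.impL (.refl _)) hs⟩
    obtain ⟨b1, b2⟩ := ihB ⟨C, hC, .trans (.impR (.refl _)) hs⟩
    constructor
    · intro h hA
      by_cases hn : Node.fml (.neg A) ∈ Δ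
      · exact absurd hA (a2 hn)
      · by_cases hB : Node.fml B ∈ Δ
        · exact b1 hB
        · obtain ⟨_, d1⟩ := hmax _ hn
          obtain ⟨_, d2⟩ := hmax _ hB
          exact absurd ⟨_, .tImp h d1 d2⟩ hopen
    · intro h hi
      by_cases hB : Node.fml (.neg B) ∈ Δ
      · by_cases hA : Node.fml A ∈ Δ
        · exact b2 hB (hi (a1 hA))
        · obtain ⟨_, d⟩ := hmax _ hA
          rw [← Set.insert_eq_of_mem hB] at d
          exact hopen ⟨_, .fImp h d⟩
      · obtain ⟨n, d⟩ := hmax _ hB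
        have := d.eventually (l := (Filter.atTop : Filter ℕ))
          (fun _ => insert (Node.fml A) (insert (Node.fml (.neg B)) Δ))
          (fun x hx => Filter.Eventually.of_forall fun _ => Set.mem_insert_of_mem _ hx)
        obtain ⟨_, hd⟩ := this.exists
        exact hopen ⟨_, .fImp h hd⟩
  | box t F _ =>
    rintro ⟨C, hC, hs⟩
    have hF : CSSub cs R F := .inl ⟨C, hC, .trans (.box (.refl _)) hs⟩
    have ht : OccRoot R t := ⟨C, hC, .of_subf hs⟩
    constructor
    · intro h
      refine Evid.base ?_ hF
      by_contra hm
      obtain ⟨_, d⟩ := hmax _ hm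
      exact hopen ⟨_, .te h d⟩
    · intro h he
      have hp := (Evid.mem hopen hmax he ht).1
      by_cases hm : Node.neg t F ∈ Δ
      · exact hopen ⟨_, .closeE hp hm⟩
      · obtain ⟨_, d⟩ := hmax _ hm
        exact hopen ⟨_, .fe h d⟩

end JLTab

/-- Cut elimination for J: if a J-formula is provable in
J^e_CS + (cut), then it is provable in J^e_CS. -/
theorem JLTab.J_cut_elimination (cs : ConstSpec Logic.J) (A : Fml)
    (hA : FmlInLang Logic.J A)
    (h : TabProof Logic.J cs true true A) :
    TabProof Logic.J cs true false A := by
  by_contra hcon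
  obtain ⟨Δ, hsub, hopen, hmax⟩ := exists_maximal hcon
  obtain ⟨n, d⟩ := h
  refine d.sound (branchModel_isModel cs {Fml.neg A} Δ) ?_
  rintro x rfl
  exact (truth hopen hmax (.neg A) ⟨_, rfl, .refl _⟩).1 (hsub rfl)
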